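/- arXiv:1812.07566 — 4 statements merged into one kernel-verified Lean document; each statement's English description precedes it below -/
import Mathlib

section
/- Let μ be a Borel measure on ℝ which is finite on compact sets and satisfies μ((−∞,0)) = 0. Let h : ℝ × ℝ → ℝ be a bounded Borel function, and let H : ℝ × ℝ → ℝ be a Borel function with a ↦ H(0,a) locally bounded, satisfying H(t,a) − H(s,a) = ∫_{[s,t)} h(u,a) dμ(u) for all s ≤ t and all a ∈ ℝ. Let ρ : ℝ → ℝ be a continuous function with compact support, and for m,n ∈ ℕ define the mollification H^{m,n}(t,a) = ∫_ℝ ∫_ℝ m n H(r,q) ρ(m(t−r)) ρ(n(a−q)) dr dq. Then for all 0 ≤ s ≤ t and all a ∈ ℝ, H^{m,n}(t,a) − H^{m,n}(s,a) = ∫_s^t Φ^{m,n}(u,a) du, where Φ^{m,n}(u,a) = ∫_ℝ ∫_ℝ m n h(r,q) ρ(m(u−r)) ρ(n(a−q)) dμ(r) dq. -/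
open MeasureTheory Set intervalIntegral

/-!
Mollifying in the parameter `a` preserves densities with respect to `μ`: by Fubini,
`t ↦ ∫ w(q) H(t,q) dq` has the density `u ↦ ∫ w(q) h(u,q) dq`. It remains to mollify in time a
function `G` of one variable with density `g` with respect to `μ`. After the substitution
`x = t - r` the increment of `∫ k(t-r) G(r) dr` over `[s, t)` is
`∫ k(x) (G(t-x) - G(s-x)) dx = ∫ k(x) ∫_{[s-x,t-x)} g(r) dμ(r) dx`. Exchanging the integrals and
substituting `u = x + r`, which lies in `[s, t)`, turns this into `∫_s^t ∫ k(u-r) g(r) dμ(r) du`: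
the shift by the Lebesgue variable `x` is what replaces `μ` by Lebesgue measure.
-/

open Function (uncurry)

theorem locallyIntegrable_of_forall_norm_le {X E : Type*} [SeminormedAddCommGroup X]
    [MeasurableSpace X] [OpensMeasurableSpace X] [NormedAddCommGroup E]
    {ν : Measure X} [IsLocallyFiniteMeasure ν] {f : X → E} (hf : AEStronglyMeasurable f ν)
    (hbound : ∀ r : ℝ, 0 < r → ∃ C : ℝ, ∀ x, ‖x‖ ≤ r → ‖f x‖ ≤ C) : LocallyIntegrable f ν := by
  intro x
  obtain ⟨C, hC⟩ := hbound (‖x‖ + 1) (by positivity)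
  refine (ν.finiteAt_nhds x).integrableAtFilter ⟨univ, Filter.univ_mem, by simpa using hf⟩
    (Filter.isBoundedUnder_of_eventually_le (a := C) ?_)
  filter_upwards [continuous_norm.continuousAt.eventually_lt_const (lt_add_one ‖x‖)] with y hy
  exact hC y hy.le

theorem hasCompactSupport_mul_comp_mul {ρ : ℝ → ℝ} (hρ : HasCompactSupport ρ) (m : ℝ) :
    HasCompactSupport fun x ↦ m * ρ (m * x) := by
  rcases eq_or_ne m 0 with rfl | hm
  · simp only [zero_mul]
    exact HasCompactSupport.zero
  · exact (hρ.comp_smul hm).mul_left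

section Fubini

variable {X E : Type*} [AddGroup X] [MeasurableSpace X] [MeasurableAdd₂ X] [MeasurableNeg X]
  [NormedAddCommGroup E] [NormedSpace ℝ E] {μ ν : Measure X} [SFinite μ] [SFinite ν]
  [ν.IsAddRightInvariant]

theorem integral_smul_setIntegral_preimage_add {k : X → ℝ} {g : X → E} (hk : Integrable k ν)
    (hg : Integrable g μ) {S : Set X} (hS : MeasurableSet S) :
    ∫ x, k x • ∫ r in (x + ·) ⁻¹' S, g r ∂μ ∂ν = ∫ u in S, ∫ r, k (u - r) • g r ∂μ ∂ν := by
  have hkg : Integrable (uncurry fun x r ↦ S.indicator (fun _ ↦ k x • g r) (x + r))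
      (ν.prod μ) :=
    (hk.smul_prod hg).indicator (measurable_add hS)
  have hconv : Integrable (uncurry fun u r ↦ k (u - r) • g r) ((ν.restrict S).prod μ) :=
    (hg.convolution_integrand (ContinuousLinearMap.lsmul ℝ ℝ).flip hk).mono_measure
      (Measure.prod_mono Measure.restrict_le_self le_rfl)
  calc ∫ x, k x • ∫ r in (x + ·) ⁻¹' S, g r ∂μ ∂ν
      = ∫ x, ∫ r, S.indicator (fun _ ↦ k x • g r) (x + r) ∂μ ∂ν := by
        refine integral_congr_ae (.of_forall fun x ↦ ?_)
        dsimp only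
        rw [← MeasureTheory.integral_smul,
          ← MeasureTheory.integral_indicator (measurable_const_add x hS)]
        rfl
    _ = ∫ r, ∫ x, S.indicator (fun _ ↦ k x • g r) (x + r) ∂ν ∂μ := integral_integral_swap hkg
    _ = ∫ r, ∫ u in S, k (u - r) • g r ∂ν ∂μ := by
        refine integral_congr_ae (.of_forall fun r ↦ ?_)
        dsimp only
        rw [← MeasureTheory.integral_indicator hS,
          ← integral_add_right_eq_self (S.indicator fun u ↦ k (u - r) • g r) r]
        simp only [indicator, add_sub_cancel_right]
    _ = ∫ u in S, ∫ r, k (u - r) • g r ∂μ ∂ν := (integral_integral_swap hconv).symm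

end Fubini

section Density

variable {A E : Type*} [MeasurableSpace A] [NormedAddCommGroup E] [NormedSpace ℝ E]
  {μ : Measure ℝ}

theorem integral_smul_setIntegral_Ico {k : ℝ → ℝ} {g : ℝ → E} [SFinite μ] (hk : Continuous k)
    (hk_supp : HasCompactSupport k) (hg : LocallyIntegrable g μ) (s t : ℝ) :
    ∫ x, k x • ∫ r in Ico (s - x) (t - x), g r ∂μ =
      ∫ u in Ico s t, ∫ r, k (u - r) • g r ∂μ := by
  obtain ⟨R, -, hR⟩ := hk_supp.exists_pos_le_norm
  let K := Icc (s - R) (t + R)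
  have hgK : Integrable g (μ.restrict K) := hg.integrableOn_isCompact isCompact_Icc
  calc ∫ x, k x • ∫ r in Ico (s - x) (t - x), g r ∂μ
      = ∫ x, k x • ∫ r in (x + ·) ⁻¹' Ico s t, g r ∂μ.restrict K := by
        refine integral_congr_ae (.of_forall fun x ↦ ?_)
        dsimp only
        rcases le_or_gt R |x| with hx | hx
        · simp only [hR x hx, zero_smul]
        · have hsub : Ico (s - x) (t - x) ⊆ K := Ico_subset_Icc_self.trans
            (Icc_subset_Icc (by linarith [le_abs_self x]) (by linarith [neg_abs_le x]))
          rw [preimage_const_add_Ico, Measure.restrict_restrict_of_subset hsub]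
    _ = ∫ u in Ico s t, ∫ r in K, k (u - r) • g r ∂μ :=
        integral_smul_setIntegral_preimage_add (hk.integrable_of_hasCompactSupport hk_supp) hgK
          measurableSet_Ico
    _ = ∫ u in Ico s t, ∫ r, k (u - r) • g r ∂μ := by
        refine setIntegral_congr_fun measurableSet_Ico fun u hu ↦ ?_
        refine setIntegral_eq_integral_of_forall_compl_eq_zero fun r hr ↦ ?_
        rw [hR (u - r) ?_, zero_smul]
        by_contra! hur
        obtain ⟨h₁, h₂⟩ := abs_lt.1 hur
        exact hr ⟨by linarith [hu.1], by linarith [hu.2]⟩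

/-- `G` admits the density `g` with respect to the reference measure `μ`: its increments are the
integrals of `g dμ` over the intervals `[s, t)`. Integrability of `g` is not part of the notion, so
the identity can hold through the junk value `0` of a divergent integral. -/
def HasDensity (μ : Measure ℝ) (G g : ℝ → E) : Prop :=
  ∀ ⦃s t : ℝ⦄, s ≤ t → G t - G s = ∫ u in Ico s t, g u ∂μ

/-- Local integrability in time of a family `f r q`, jointly with integrability over the whole
parameter space `A`: the condition under which integrals in `r` and in `q` may be exchanged. -/
def LocallyIntegrableInTime (f : ℝ → A → E) (μ : Measure ℝ) (ν : Measure A) : Prop :=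
  ∀ c d : ℝ, Integrable (uncurry f) ((μ.restrict (Ico c d)).prod ν)

namespace HasDensity

theorem const_smul {G g : ℝ → E} (h : HasDensity μ G g) (c : ℝ) :
    HasDensity μ (fun t ↦ c • G t) (fun t ↦ c • g t) := fun s t hst ↦ by
  rw [← smul_sub, h hst, MeasureTheory.integral_smul]

theorem sub_eq_intervalIntegral {G g : ℝ → E} (h : HasDensity volume G g) (s t : ℝ) :
    G t - G s = ∫ u in s..t, g u := by
  rcases le_total s t with hst | hts
  · rw [h hst, integral_of_le hst, integral_Ico_eq_integral_Ioc]
  · rw [← neg_sub, h hts, integral_of_ge hts, integral_Ico_eq_integral_Ioc]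

theorem convolution [SFinite μ] {G g : ℝ → E} (h : HasDensity μ G g)
    (hG : LocallyIntegrable G) (hg : LocallyIntegrable g μ) {k : ℝ → ℝ} (hk : Continuous k)
    (hk_supp : HasCompactSupport k) :
    HasDensity volume (fun t ↦ ∫ r, k (t - r) • G r) (fun u ↦ ∫ r, k (u - r) • g r ∂μ) := by
  intro s t hst
  have hint (t : ℝ) : Integrable fun x ↦ k x • G (t - x) := by
    simpa only [sub_sub_cancel] using (hG.integrable_smul_left_of_hasCompactSupport
      (g := fun r ↦ k (t - r)) (by fun_prop)
      (hk_supp.comp_homeomorph (Homeomorph.subLeft t))).comp_sub_left t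
  have hflip (t : ℝ) : ∫ r, k (t - r) • G r = ∫ x, k x • G (t - x) := by
    simpa only [sub_sub_cancel] using
      integral_sub_left_eq_self (fun x ↦ k x • G (t - x)) volume t
  simp only [hflip, ← integral_smul_setIntegral_Ico hk hk_supp hg s t,
    ← MeasureTheory.integral_sub (hint t) (hint s), ← smul_sub]
  exact integral_congr_ae (.of_forall fun x ↦ by
    dsimp only
    rw [h (sub_le_sub_right hst x)])

end HasDensity

namespace LocallyIntegrableInTime

variable {ν : Measure A} [SFinite ν] {f : ℝ → A → E}

theorem locallyIntegrable_integral (hf : LocallyIntegrableInTime f μ ν) :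
    LocallyIntegrable (fun r ↦ ∫ q, f r q ∂ν) μ := fun x ↦
  ⟨Ico (x - 1) (x + 1), Ico_mem_nhds (by linarith) (by linarith),
    (hf (x - 1) (x + 1)).integral_prod_left⟩

theorem integrable_smul [SFinite μ] (hf : LocallyIntegrableInTime f μ ν) {k : ℝ → ℝ}
    (hk : Continuous k) (hk_supp : HasCompactSupport k) :
    Integrable (uncurry fun r q ↦ k r • f r q) (μ.prod ν) := by
  obtain ⟨R, -, hR⟩ := hk_supp.exists_pos_le_norm
  obtain ⟨B, hB⟩ := hk_supp.exists_bound_of_continuous hk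
  have hkf : Integrable (uncurry fun r q ↦ k r • f r q) ((μ.restrict (Ico (-R) R)).prod ν) :=
    (hf (-R) R).bdd_smul B (φ := fun p : ℝ × A ↦ k p.1)
      (hk.comp_aestronglyMeasurable (by fun_prop)) (.of_forall fun p ↦ hB p.1)
  rw [← ν.restrict_univ, Measure.prod_restrict] at hkf
  refine IntegrableOn.integrable_of_forall_notMem_eq_zero hkf fun ⟨r, q⟩ hrq ↦ ?_
  have hr : R ≤ |r| := by
    by_contra! hr
    exact hrq ⟨⟨(abs_lt.1 hr).1.le, (abs_lt.1 hr).2⟩, mem_univ q⟩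
  simp only [uncurry, hR r hr, zero_smul]

theorem integral_integral_smul_swap [SFinite μ] (hf : LocallyIntegrableInTime f μ ν) {k : ℝ → ℝ}
    (hk : Continuous k) (hk_supp : HasCompactSupport k) (u : ℝ) :
    ∫ q, ∫ r, k (u - r) • f r q ∂μ ∂ν = ∫ r, k (u - r) • ∫ q, f r q ∂ν ∂μ := by
  have hkf := hf.integrable_smul (k := fun r ↦ k (u - r)) (by fun_prop)
    (hk_supp.comp_homeomorph (Homeomorph.subLeft u))
  simp only [← integral_integral_swap hkf, MeasureTheory.integral_smul]

end LocallyIntegrableInTime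

namespace HasDensity

variable {ν : Measure A} [SFinite ν] {F f : ℝ → A → E}

theorem integrable_of_integrable [SFinite μ] (h : ∀ q, HasDensity μ (F · q) (f · q))
    (hf : LocallyIntegrableInTime f μ ν) {c : ℝ} (hF : Integrable (F c) ν) (t : ℝ) :
    Integrable (F t) ν := by
  have hinc (s t : ℝ) : Integrable (fun q ↦ ∫ u in Ico s t, f u q ∂μ) ν :=
    (hf s t).integral_prod_right
  rcases le_total c t with hct | htc
  · refine (hF.add (hinc c t)).congr (.of_forall fun q ↦ ?_)
    simp only [Pi.add_apply, ← h q hct, add_sub_cancel]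
  · refine (hF.sub (hinc t c)).congr (.of_forall fun q ↦ ?_)
    simp only [Pi.sub_apply, ← h q htc, sub_sub_cancel]

theorem integral [SFinite μ] (h : ∀ q, HasDensity μ (F · q) (f · q))
    (hf : LocallyIntegrableInTime f μ ν) (hF : ∀ t, Integrable (F t) ν) :
    HasDensity μ (fun t ↦ ∫ q, F t q ∂ν) (fun t ↦ ∫ q, f t q ∂ν) := fun s t hst ↦
  calc ∫ q, F t q ∂ν - ∫ q, F s q ∂ν
      = ∫ q, ∫ u in Ico s t, f u q ∂μ ∂ν := by
        simp only [← MeasureTheory.integral_sub (hF t) (hF s), h _ hst]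
    _ = ∫ u in Ico s t, ∫ q, f u q ∂ν ∂μ := (integral_integral_swap (hf s t)).symm

theorem locallyIntegrableInTime [SFinite μ] (h : ∀ q, HasDensity μ (F · q) (f · q))
    (hf : LocallyIntegrableInTime f μ ν) (hF : ∀ t, Integrable (F t) ν)
    (κ : Measure ℝ) [IsLocallyFiniteMeasure κ] : LocallyIntegrableInTime F κ ν := by
  intro c d
  have : IsFiniteMeasure (κ.restrict (Ico c d)) :=
    ⟨by simpa only [Measure.restrict_apply_univ] using measure_Ico_lt_top⟩
  -- On `[c, d) × A`, `F r q = F c q + ∫ u in [c, d), 1_{u < r} f u q ∂μ`; the integrand on the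
  -- right is jointly integrable in `(r, q, u)`, so its integral over `u` is integrable in `(r, q)`.
  have h_lt : MeasurableSet {p : (ℝ × A) × ℝ | p.2 < p.1.1} :=
    measurableSet_lt (by fun_prop) (by fun_prop)
  have hfrq : Integrable (fun p : (ℝ × A) × ℝ ↦ f p.2 p.1.2)
      (((κ.restrict (Ico c d)).prod ν).prod (μ.restrict (Ico c d))) :=
    (measurePreserving_prodAssoc _ ν _).integrable_comp_of_integrable
      ((hf c d).swap.comp_snd (κ.restrict (Ico c d)))
  have hinc := (hfrq.indicator h_lt).integral_prod_left
  refine (((hF c).comp_snd (κ.restrict (Ico c d))).add hinc).congr ?_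
  have hmem : ∀ᵐ p : ℝ × A ∂(κ.restrict (Ico c d)).prod ν, p.1 ∈ Ico c d :=
    Measure.quasiMeasurePreserving_fst.ae (ae_restrict_mem measurableSet_Ico)
  filter_upwards [hmem] with ⟨r, q⟩ hr
  have hsub : Iio r ∩ Ico c d = Ico c r := by
    ext u
    simp only [mem_inter_iff, mem_Iio, mem_Ico] at hr ⊢
    exact ⟨fun h ↦ ⟨h.2.1, h.1⟩, fun h ↦ ⟨h.2, h.1, h.2.trans hr.2⟩⟩
  have h_incr : ∫ u in Ico c d, (Iio r).indicator (f · q) u ∂μ = F r q - F c q := by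
    rw [MeasureTheory.integral_indicator measurableSet_Iio,
      Measure.restrict_restrict measurableSet_Iio, hsub, h q hr.1]
  exact (congrArg (F c q + ·) h_incr).trans (add_sub_cancel _ _)

theorem integral_convolution [SFinite μ] (h : ∀ q, HasDensity μ (F · q) (f · q))
    (hf : LocallyIntegrableInTime f μ ν) {c : ℝ} (hF : Integrable (F c) ν) {k : ℝ → ℝ}
    (hk : Continuous k) (hk_supp : HasCompactSupport k) :
    HasDensity volume (fun t ↦ ∫ q, ∫ r, k (t - r) • F r q ∂volume ∂ν)
      (fun u ↦ ∫ q, ∫ r, k (u - r) • f r q ∂μ ∂ν) := by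
  have hFint := integrable_of_integrable h hf hF
  have hFloc := locallyIntegrableInTime h hf hFint volume
  simp only [hf.integral_integral_smul_swap hk hk_supp,
    hFloc.integral_integral_smul_swap hk hk_supp]
  exact (integral h hf hFint).convolution hFloc.locallyIntegrable_integral
    hf.locallyIntegrable_integral hk hk_supp

end HasDensity

theorem LocallyIntegrableInTime.smul_of_locallyIntegrable [TopologicalSpace A] [T2Space A]
    [OpensMeasurableSpace A] {ν : Measure A} [SFinite ν] [SFinite μ] {f : ℝ → A → E}
    (hf : LocallyIntegrable (uncurry f) (μ.prod ν)) {w : A → ℝ} (hw : Continuous w)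
    (hw_supp : HasCompactSupport w) :
    LocallyIntegrableInTime (fun r q ↦ w q • f r q) μ ν := by
  intro c d
  have hK : IsCompact (Icc c d ×ˢ tsupport w) := isCompact_Icc.prod hw_supp
  have hwf : IntegrableOn (uncurry fun r q ↦ w q • f r q) (Icc c d ×ˢ tsupport w) (μ.prod ν) :=
    (hf.integrableOn_isCompact hK).continuousOn_smul (f := fun p : ℝ × A ↦ w p.2)
      (by fun_prop) hK
  rw [← ν.restrict_univ, Measure.prod_restrict]
  refine hwf.of_forall_sdiff_eq_zero (measurableSet_Ico.prod .univ) fun ⟨r, q⟩ hrq ↦ ?_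
  have hq : q ∉ tsupport w := fun hq ↦ hrq.2 ⟨Ico_subset_Icc_self hrq.1.1, hq⟩
  simp only [uncurry, image_eq_zero_of_notMem_tsupport hq, zero_smul]

end Density

theorem stmt2_general {E : Type*} [NormedAddCommGroup E] [NormedSpace ℝ E] {μ : Measure ℝ}
    [SFinite μ] {h H : ℝ → ℝ → E} (hh : LocallyIntegrable (uncurry h) (μ.prod volume))
    {c : ℝ} (hH : LocallyIntegrable (H c)) (hdens : ∀ a, HasDensity μ (H · a) (h · a))
    {ρ σ : ℝ → ℝ} (hρ : Continuous ρ) (hρ_supp : HasCompactSupport ρ) (hσ : Continuous σ)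
    (hσ_supp : HasCompactSupport σ) (m n s t a : ℝ) :
    (∫ q, ∫ r, (m * n * ρ (m * (t - r)) * σ (n * (a - q))) • H r q) -
        (∫ q, ∫ r, (m * n * ρ (m * (s - r)) * σ (n * (a - q))) • H r q) =
      ∫ u in s..t, ∫ q, ∫ r, (m * n * ρ (m * (u - r)) * σ (n * (a - q))) • h r q ∂μ := by
  let k (x : ℝ) : ℝ := m * ρ (m * x)
  let w (q : ℝ) : ℝ := n * σ (n * (a - q))
  have hk : Continuous k := by fun_prop
  have hw : Continuous w := by fun_prop
  have hw_supp : HasCompactSupport w :=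
    (hasCompactSupport_mul_comp_mul hσ_supp n).comp_homeomorph (Homeomorph.subLeft a)
  have hfactor (u r q : ℝ) :
      m * n * ρ (m * (u - r)) * σ (n * (a - q)) = k (u - r) * w q := by ring
  simp only [hfactor, mul_smul]
  exact (HasDensity.integral_convolution (fun q ↦ (hdens q).const_smul (w q))
    (.smul_of_locallyIntegrable hh hw hw_supp)
    (hH.integrable_smul_left_of_hasCompactSupport hw hw_supp) hk
    (hasCompactSupport_mul_comp_mul hρ_supp m)).sub_eq_intervalIntegral s t

/-- If `H(t,a) − H(s,a) = ∫_{[s,t)} h(u,a) dμ(u)` for a Radon reference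
measure `μ` (finite on compacts, vanishing on `(−∞,0)`), then the two-parameter mollification
`H^{m,n}` admits, in its time variable, the Lebesgue density obtained by mollifying `h dμ`. -/
theorem stmt2 (μ : Measure ℝ) [IsFiniteMeasureOnCompacts μ] (hμ : μ (Set.Iio 0) = 0)
    (h H : ℝ → ℝ → ℝ)
    (hhmeas : Measurable (Function.uncurry h)) (M : ℝ) (hhbd : ∀ u a, |h u a| ≤ M)
    (hHmeas : Measurable (Function.uncurry H))
    (hHloc : ∀ r : ℝ, 0 < r → ∃ C : ℝ, ∀ a : ℝ, |a| ≤ r → |H 0 a| ≤ C)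
    (hdens : ∀ s t a : ℝ, s ≤ t → H t a - H s a = ∫ u in Set.Ico s t, h u a ∂μ)
    (ρ : ℝ → ℝ) (hρ : Continuous ρ) (hρsupp : HasCompactSupport ρ) :
    ∀ (m n : ℕ) (s t a : ℝ), 0 ≤ s → s ≤ t →
      (∫ q, ∫ r, (m:ℝ) * (n:ℝ) * H r q * ρ ((m:ℝ) * (t - r)) * ρ ((n:ℝ) * (a - q)))
        - (∫ q, ∫ r, (m:ℝ) * (n:ℝ) * H r q * ρ ((m:ℝ) * (s - r)) * ρ ((n:ℝ) * (a - q)))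
      = ∫ u in s..t,
          (∫ q, ∫ r, (m:ℝ) * (n:ℝ) * h r q * ρ ((m:ℝ) * (u - r)) * ρ ((n:ℝ) * (a - q)) ∂μ) := by
  intro m n s t a _ _
  have hh : LocallyIntegrable (uncurry h) (μ.prod volume) :=
    (locallyIntegrable_const M).mono hhmeas.aestronglyMeasurable
      (.of_forall fun p ↦ (hhbd p.1 p.2).trans (le_abs_self M))
  have hH : LocallyIntegrable (H 0) :=
    locallyIntegrable_of_forall_norm_le
      (hHmeas.comp measurable_prodMk_left).aestronglyMeasurable hHloc
  simpa only [smul_eq_mul, mul_comm, mul_left_comm, mul_assoc] using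
    stmt2_general hh hH (fun a s t hst ↦ hdens s t a hst) hρ hρsupp hρ hρsupp m n s t a
end

section
/- Let ν be a finite Borel measure on ℝ, M ≥ 0, κ ∈ [0,1/2), and let h : [0,∞) × ℝ → ℝ be Borel measurable with |h(t,z)| ≤ M and |h(t,z)·ν({z})| ≤ κ for all (t,z). Let A = {z ∈ ℝ : ν({z}) > 0} (a countable set), let ν^c be the restriction of ν to the complement of A, and define ζ(t,x) = ∫_{(−∞,x)} h(t,z) dν^c(z), ψ(t,x) = ∏_{z ∈ A, z < x} (1 − h(t,z)ν({z})), and F_x(t,a) = e^{ζ(t,a)} ψ(t,a). Then for each fixed t ≥ 0: the function x ↦ ζ(t,x) is continuous; the function a ↦ F_x(t,a) is left-continuous and has right limits everywhere; and for every a ∈ ℝ, lim_{b ↓ a} F_x(t,b) = F_x(t,a)·(1 − h(t,a)ν({a})). -/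
open MeasureTheory Set Filter Topology
open scoped ENNReal

/-!
Both `ζ(t, ·)` and `ψ(t, ·)` depend on `x` only through the half-line `(-∞, x)`, whose indicator
converges pointwise to that of `(-∞, a)` as `x ↑ a` and to that of `(-∞, a]` as `x ↓ a`. Dominated
convergence, for integrals and for infinite products, passes these limits through `ζ` and `ψ`. The
two limits differ at the single point `a`, which is null for the continuous part of `ν` and
contributes the factor `1 - h(t, a) ν({a})` to the product.
-/

section EventuallyConstantIndicator

variable {α β ι : Type*} {l : Filter ι} {s : ι → Set α} {t : Set α}

theorem tendsto_indicator_of_eventually_mem_iff [Zero β] [TopologicalSpace β] (f : α → β) {z : α}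
    (hz : ∀ᶠ i in l, (z ∈ s i ↔ z ∈ t)) :
    Tendsto (fun i ↦ (s i).indicator f z) l (𝓝 (t.indicator f z)) := by
  classical
  refine tendsto_const_nhds.congr' ?_
  filter_upwards [hz] with i hi
  simp only [indicator_apply, hi]

theorem tendsto_setIntegral_of_ae_eventually_mem_iff {E : Type*} [NormedAddCommGroup E]
    [NormedSpace ℝ E] {_ : MeasurableSpace α} {μ : Measure α} [l.IsCountablyGenerated]
    (hs : ∀ i, MeasurableSet (s i)) (ht : MeasurableSet t) {g : α → E} (hg : Integrable g μ)
    (hst : ∀ᵐ z ∂μ, ∀ᶠ i in l, (z ∈ s i ↔ z ∈ t)) :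
    Tendsto (fun i ↦ ∫ z in s i, g z ∂μ) l (𝓝 (∫ z in t, g z ∂μ)) := by
  simp_rw [← integral_indicator ht, ← integral_indicator (hs _)]
  refine tendsto_integral_filter_of_dominated_convergence (‖g ·‖) ?_ ?_ hg.norm ?_
  · exact .of_forall fun i ↦ hg.aestronglyMeasurable.indicator (hs i)
  · exact .of_forall fun i ↦ ae_of_all μ fun z ↦ norm_indicator_le_norm_self g z
  · exact hst.mono fun z hz ↦ tendsto_indicator_of_eventually_mem_iff g hz

variable {R : Type*} [NormedCommRing R] [NormOneClass R] [CompleteSpace R] {f : α → R}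

theorem tendsto_tprod_one_add_indicator (hf : Summable (‖f ·‖))
    (hst : ∀ z, ∀ᶠ i in l, (z ∈ s i ↔ z ∈ t)) :
    Tendsto (fun i ↦ ∏' z, (1 + (s i).indicator f z)) l (𝓝 (∏' z, (1 + t.indicator f z))) :=
  tendsto_tprod_one_add_of_dominated_convergence hf
    (fun z ↦ tendsto_indicator_of_eventually_mem_iff f (hst z))
    (.of_forall fun _ ↦ norm_indicator_le_norm_self f)

theorem tprod_one_add_indicator_insert (hf : Summable (‖f ·‖)) {a : α} (ha : a ∉ t) :
    ∏' z, (1 + (insert a t).indicator f z) = (∏' z, (1 + t.indicator f z)) * (1 + f a) := by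
  have multipliable (u : Set α) : Multipliable fun z ↦ 1 + u.indicator f z :=
    multipliable_one_add_of_summable <|
      hf.of_nonneg_of_le (fun _ ↦ norm_nonneg _) (norm_indicator_le_norm_self f)
  have factor (z : α) : 1 + (insert a t).indicator f z =
      (1 + t.indicator f z) * (1 + ({a} : Set α).indicator f z) := by
    by_cases hza : z = a
    · simp [hza, ha]
    · by_cases hzt : z ∈ t <;> simp [hza, hzt]
  have singleton : ∏' z, (1 + ({a} : Set α).indicator f z) = 1 + f a := by
    rw [tprod_eq_mulSingle a fun z hz ↦ by simp [hz], indicator_of_mem (mem_singleton a)]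
  rw [tprod_congr factor, (multipliable t).tprod_mul (multipliable {a}), singleton]

end EventuallyConstantIndicator

section HalfLines

variable {X : Type*} [LinearOrder X] [TopologicalSpace X] [OrderClosedTopology X]

theorem eventually_nhds_mem_Iio_iff {a z : X} (hz : z ≠ a) :
    ∀ᶠ b in 𝓝 a, (z ∈ Iio b ↔ z ∈ Iio a) := by
  rcases hz.lt_or_gt with hza | haz
  · filter_upwards [Ioi_mem_nhds hza] with b hb
    exact iff_of_true hb hza
  · filter_upwards [Iio_mem_nhds haz] with b hb
    exact iff_of_false (lt_asymm hb) (lt_asymm haz)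

theorem eventually_nhdsLT_mem_Iio_iff (a z : X) :
    ∀ᶠ b in 𝓝[<] a, (z ∈ Iio b ↔ z ∈ Iio a) := by
  rcases eq_or_ne z a with rfl | hz
  · filter_upwards [self_mem_nhdsWithin] with b hb
    exact iff_of_false (lt_asymm hb) (lt_irrefl z)
  · exact (eventually_nhds_mem_Iio_iff hz).filter_mono nhdsWithin_le_nhds

theorem eventually_nhdsGT_mem_Iio_iff (a z : X) :
    ∀ᶠ b in 𝓝[>] a, (z ∈ Iio b ↔ z ∈ Iic a) := by
  rcases eq_or_ne z a with rfl | hz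
  · filter_upwards [self_mem_nhdsWithin] with b hb
    exact iff_of_true hb le_rfl
  · filter_upwards [(eventually_nhds_mem_Iio_iff hz).filter_mono nhdsWithin_le_nhds] with b hb
    exact hb.trans hz.le_iff_lt.symm

theorem continuous_setIntegral_Iio [FirstCountableTopology X] [MeasurableSpace X]
    [OpensMeasurableSpace X] {E : Type*} [NormedAddCommGroup E] [NormedSpace ℝ E]
    {μ : Measure X} [NullSingletonClass μ] {g : X → E} (hg : Integrable g μ) :
    Continuous fun x ↦ ∫ z in Iio x, g z ∂μ :=
  continuous_iff_continuousAt.2 fun a ↦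
    tendsto_setIntegral_of_ae_eventually_mem_iff (fun _ ↦ measurableSet_Iio) measurableSet_Iio hg
      ((μ.ae_ne a).mono fun _ ↦ eventually_nhds_mem_Iio_iff)

end HalfLines

section Atoms

variable {α : Type*} [MeasurableSpace α]

/-- The continuous part `ν^c` of `ν`, carrying the integral `ζ`: the restriction of `ν` to the set
of its non-atoms. -/
noncomputable def continuousPart (ν : Measure α) : Measure α :=
  ν.restrict {z | ν {z} = 0}

variable [MeasurableSingletonClass α] {ν : Measure α}

instance nullSingletonClass_continuousPart : NullSingletonClass (continuousPart ν) where
  measure_singleton x := by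
    rw [continuousPart, Measure.restrict_apply (measurableSet_singleton x)]
    by_cases hx : ν {x} = 0
    · exact measure_mono_null inter_subset_left hx
    · rw [singleton_inter_eq_empty.2 (show x ∉ {z | ν {z} = 0} from hx), measure_empty]

theorem summable_norm_measureReal_singleton_smul {E : Type*} [NormedAddCommGroup E]
    [NormedSpace ℝ E] {g : α → E} (hg : Integrable g ν) :
    Summable fun z ↦ ‖ν.real {z} • g z‖ := by
  refine summable_of_sum_le (c := ∫ z, ‖g z‖ ∂ν) (fun _ ↦ norm_nonneg _) fun u ↦ ?_
  calc ∑ z ∈ u, ‖ν.real {z} • g z‖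
      = ∑ z ∈ u, ν.real {z} • ‖g z‖ := by
        simp only [norm_smul_of_nonneg measureReal_nonneg, smul_eq_mul]
    _ = ∫ z in u, ‖g z‖ ∂ν := (setIntegral_finset u hg.norm.integrableOn).symm
    _ ≤ ∫ z, ‖g z‖ ∂ν := setIntegral_le_integral hg.norm (ae_of_all ν fun _ ↦ norm_nonneg _)

end Atoms

section AtomProduct

variable {X R : Type*} [LinearOrder X] [MeasurableSpace X] [NormedCommRing R] [NormedAlgebra ℝ R]

/-- The product `ψ` of the factors `1 - g(z) ν({z})` over the atoms `z < x` of `ν`. The time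
variable of the paper is fixed: `g` stands for `h(t, ·)`. An atom of infinite mass has
`ν.real {z} = 0`, which is harmless for integrable `g`, as then `g z = 0`. -/
noncomputable def atomProduct (ν : Measure X) (g : X → R) (x : X) : R :=
  ∏' z : {z : X // 0 < ν {z} ∧ z < x}, (1 - ν.real {(z : X)} • g z)

/-- The left space-derivative `F_x = e^ζ ψ` of the transformation `F`, again at a fixed time. -/
noncomputable def leftSpaceDeriv (ν : Measure X) (g : X → R) (x : X) : R :=
  NormedSpace.exp (∫ z in Iio x, g z ∂continuousPart ν) * atomProduct ν g x

theorem atomProduct_eq_tprod_one_add_indicator (ν : Measure X) (g : X → R) (x : X) :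
    atomProduct ν g x = ∏' z, (1 + (Iio x).indicator (fun z ↦ ν.real {z} • -g z) z) := by
  refine (tprod_subtype {z | 0 < ν {z} ∧ z < x} fun z ↦ 1 - ν.real {z} • g z).trans
    (tprod_congr fun z ↦ ?_)
  by_cases hν : ν {z} = 0
  · simp [mulIndicator, indicator, measureReal_def, hν]
  · by_cases hzx : z < x <;> simp [pos_iff_ne_zero, hν, hzx, sub_eq_add_neg]

variable [TopologicalSpace X] [OrderClosedTopology X] [OpensMeasurableSpace X]
  [NormOneClass R] [CompleteSpace R] {ν : Measure X} {g : X → R}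

theorem tendsto_atomProduct_nhdsLT (hg : Integrable g ν) (a : X) :
    Tendsto (atomProduct ν g) (𝓝[<] a) (𝓝 (atomProduct ν g a)) := by
  have hsum : Summable fun z ↦ ‖ν.real {z} • -g z‖ :=
    summable_norm_measureReal_singleton_smul hg.neg
  rw [funext (atomProduct_eq_tprod_one_add_indicator ν g)]
  exact tendsto_tprod_one_add_indicator hsum (eventually_nhdsLT_mem_Iio_iff a)

theorem tendsto_atomProduct_nhdsGT (hg : Integrable g ν) (a : X) :
    Tendsto (atomProduct ν g) (𝓝[>] a) (𝓝 (atomProduct ν g a * (1 - ν.real {a} • g a))) := by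
  have hsum : Summable fun z ↦ ‖ν.real {z} • -g z‖ :=
    summable_norm_measureReal_singleton_smul hg.neg
  have hjump : atomProduct ν g a * (1 - ν.real {a} • g a) =
      ∏' z, (1 + (Iic a).indicator (fun z ↦ ν.real {z} • -g z) z) := by
    rw [← Iio_insert, tprod_one_add_indicator_insert hsum self_notMem_Iio,
      atomProduct_eq_tprod_one_add_indicator, smul_neg, sub_eq_add_neg]
  rw [hjump, funext (atomProduct_eq_tprod_one_add_indicator ν g)]
  exact tendsto_tprod_one_add_indicator hsum (eventually_nhdsGT_mem_Iio_iff a)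

theorem stmt7_general [FirstCountableTopology X] (hg : Integrable g ν) :
    Continuous (fun x ↦ ∫ z in Iio x, g z ∂continuousPart ν) ∧
      (∀ a, Tendsto (leftSpaceDeriv ν g) (𝓝[<] a) (𝓝 (leftSpaceDeriv ν g a))) ∧
      (∀ a, ∃ l, Tendsto (leftSpaceDeriv ν g) (𝓝[>] a) (𝓝 l)) ∧
      ∀ a, Tendsto (leftSpaceDeriv ν g) (𝓝[>] a)
        (𝓝 (leftSpaceDeriv ν g a * (1 - ν.real {a} • g a))) := by
  have hζ : Continuous fun x ↦ ∫ z in Iio x, g z ∂continuousPart ν :=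
    continuous_setIntegral_Iio hg.restrict
  have hexp (a : X) (s : Set X) :
      Tendsto (fun x ↦ NormedSpace.exp (∫ z in Iio x, g z ∂continuousPart ν)) (𝓝[s] a)
        (𝓝 (NormedSpace.exp (∫ z in Iio a, g z ∂continuousPart ν))) := by
    let +nondep : NormedAlgebra ℚ R := .restrictScalars ℚ ℝ R
    exact (NormedSpace.exp_continuous.comp hζ).continuousWithinAt
  have right_limit (a : X) : Tendsto (leftSpaceDeriv ν g) (𝓝[>] a)
      (𝓝 (leftSpaceDeriv ν g a * (1 - ν.real {a} • g a))) := by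
    rw [leftSpaceDeriv, mul_assoc]
    exact (hexp a _).mul (tendsto_atomProduct_nhdsGT hg a)
  exact ⟨hζ, fun a ↦ (hexp a _).mul (tendsto_atomProduct_nhdsLT hg a),
    fun a ↦ ⟨_, right_limit a⟩, right_limit⟩

end AtomProduct

/-- One-sided regularity of the space-derivative `F_x(t,a) = e^{ζ(t,a)} ψ(t,a)`
of the transformation of Section 7: `ζ(t,·)` is continuous, `F_x(t,·)` is left-continuous
with right limits everywhere, and at each point `a` the right limit equals
`F_x(t,a)·(1 − h(t,a)ν({a}))`. -/
theorem stmt7 (ν : Measure ℝ) [IsFiniteMeasure ν]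
    (M κ : ℝ) (hM : 0 ≤ M) (hκ0 : 0 ≤ κ) (hκ : κ < 1 / 2)
    (h : ℝ → ℝ → ℝ) (hmeas : Measurable (Function.uncurry h))
    (hbd : ∀ t z, 0 ≤ t → |h t z| ≤ M)
    (hatom : ∀ t z, 0 ≤ t → |h t z * (ν {z}).toReal| ≤ κ)
    (ζ ψ Fx : ℝ → ℝ → ℝ)
    (hζ : ∀ t x, ζ t x = ∫ z in Set.Iio x, h t z ∂(ν.restrict {z : ℝ | ν {z} = 0}))
    (hψ : ∀ t x, ψ t x =
      ∏' z : {z : ℝ // 0 < ν {z} ∧ z < x}, (1 - h t (z : ℝ) * (ν {(z : ℝ)}).toReal))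
    (hFx : ∀ t a, Fx t a = Real.exp (ζ t a) * ψ t a) :
    ∀ t : ℝ, 0 ≤ t →
      Continuous (ζ t) ∧
      (∀ a : ℝ, Tendsto (Fx t) (nhdsWithin a (Set.Iio a)) (𝓝 (Fx t a))) ∧
      (∀ a : ℝ, ∃ l : ℝ, Tendsto (Fx t) (nhdsWithin a (Set.Ioi a)) (𝓝 l)) ∧
      (∀ a : ℝ, Tendsto (Fx t) (nhdsWithin a (Set.Ioi a))
        (𝓝 (Fx t a * (1 - h t a * (ν {a}).toReal)))) := by
  intro t ht
  have hint : Integrable (h t) ν :=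
    .of_bound hmeas.of_uncurry_left.aestronglyMeasurable M (ae_of_all ν fun z ↦ hbd t z ht)
  have hF : Fx t = leftSpaceDeriv ν (h t) := funext fun a ↦ by
    simp only [hFx, hζ, hψ, leftSpaceDeriv, atomProduct, continuousPart, Real.exp_eq_exp_ℝ,
      measureReal_def, smul_eq_mul, mul_comm]
  simpa only [hF, funext (hζ t), continuousPart, measureReal_def, smul_eq_mul,
    mul_comm (ν _).toReal] using stmt7_general hint
end

section
/- Let σ, g : [0,∞) × ℝ → ℝ be functions and C₁, C₂ ≥ 0 constants with |σ(t,x)| ≤ C₁ and |g(t,x)| ≤ C₂ for all (t,x). Suppose there exist nondecreasing functions ρ, w : ℝ → ℝ such that for all t ≥ 0 and all x ≤ y, (σ(t,y) − σ(t,x))² ≤ ρ(y) − ρ(x) and |g(t,y) − g(t,x)| ≤ w(y) − w(x). Then there exists a nondecreasing function ρ̃ : ℝ → ℝ (for instance ρ̃ = 2C₂²·ρ + 4C₁²C₂·w) such that for all t ≥ 0 and all x ≤ y, ((g·σ)(t,y) − (g·σ)(t,x))² ≤ ρ̃(y) − ρ̃(x), where (g·σ)(t,x) = g(t,x)·σ(t,x).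 -/
/-!
The increment of a product splits as
`g y • f y - g x • f x = g y • (f y - f x) + (g y - g x) • f x`,
and `(a + b) ^ 2 ≤ 2 * (a ^ 2 + b ^ 2)` separates the two terms. The increment of `g` is controlled
only to the first power, but one of the two factors in its square can be bounded by twice
a bound for `g`.
-/

/-- `HasVariationBound p f ρ` says that the `p`-th power of every increment of every member of the
family `f` is at most the increment of `ρ`. For real-valued `f` indexed by time, `p = 2` is the
Nakao-type condition and `p = 1` is control of the spatial variation uniformly in time.
It forces `ρ` to be monotone unless the family is empty. -/
def HasVariationBound {ι α E : Type*} [Preorder α] [SeminormedAddCommGroup E]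
    (p : ℕ) (f : ι → α → E) (ρ : α → ℝ) : Prop :=
  ∀ i ⦃x y⦄, x ≤ y → ‖f i y - f i x‖ ^ p ≤ ρ y - ρ x

section NormSMul

variable {𝕜 E : Type*} [SeminormedRing 𝕜] [SeminormedAddCommGroup E] [Module 𝕜 E]
  [IsBoundedSMul 𝕜 E]

theorem norm_smul_sub_smul_le (a b : 𝕜) (u v : E) :
    ‖b • v - a • u‖ ≤ ‖b‖ * ‖v - u‖ + ‖b - a‖ * ‖u‖ :=
  calc ‖b • v - a • u‖ = ‖b • (v - u) + (b - a) • u‖ := by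
        rw [smul_sub, sub_smul, sub_add_sub_cancel]
    _ ≤ ‖b‖ * ‖v - u‖ + ‖b - a‖ * ‖u‖ :=
        norm_add_le_of_le (norm_smul_le _ _) (norm_smul_le _ _)

theorem norm_smul_sub_smul_pow_le (p : ℕ) (a b : 𝕜) (u v : E) :
    ‖b • v - a • u‖ ^ p ≤
      2 ^ (p - 1) * (‖b‖ ^ p * ‖v - u‖ ^ p + ‖u‖ ^ p * ‖b - a‖ ^ p) :=
  calc ‖b • v - a • u‖ ^ p ≤ (‖b‖ * ‖v - u‖ + ‖b - a‖ * ‖u‖) ^ p := by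
        gcongr
        exact norm_smul_sub_smul_le a b u v
    _ ≤ 2 ^ (p - 1) * ((‖b‖ * ‖v - u‖) ^ p + (‖b - a‖ * ‖u‖) ^ p) :=
        add_pow_le (by positivity) (by positivity) p
    _ = 2 ^ (p - 1) * (‖b‖ ^ p * ‖v - u‖ ^ p + ‖u‖ ^ p * ‖b - a‖ ^ p) := by
        rw [mul_pow, mul_pow, mul_comm (‖b - a‖ ^ p)]

end NormSMul

namespace HasVariationBound

variable {ι α E : Type*} [Preorder α] [SeminormedAddCommGroup E]
  {p q : ℕ} {f : ι → α → E} {ρ : α → ℝ}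

theorem monotone [Nonempty ι] (hf : HasVariationBound p f ρ) : Monotone ρ := by
  inhabit ι
  exact fun x y hxy ↦ sub_nonneg.mp <| (pow_nonneg (norm_nonneg _) p).trans (hf default hxy)

theorem of_exponent_le {C : ℝ} (hf : HasVariationBound q f ρ) (hC : ∀ i x, ‖f i x‖ ≤ C)
    (hqp : q ≤ p) : HasVariationBound p f (fun x ↦ (2 * C) ^ (p - q) * ρ x) := by
  intro i x y hxy
  have increment_le : ‖f i y - f i x‖ ≤ 2 * C :=
    (norm_sub_le_of_le (hC i y) (hC i x)).trans_eq (two_mul C).symm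
  have hC_nonneg : 0 ≤ C := (norm_nonneg _).trans (hC i x)
  calc ‖f i y - f i x‖ ^ p = ‖f i y - f i x‖ ^ (p - q) * ‖f i y - f i x‖ ^ q :=
        (pow_sub_mul_pow _ hqp).symm
    _ ≤ (2 * C) ^ (p - q) * (ρ y - ρ x) := by
        gcongr
        exact hf i hxy
    _ = (2 * C) ^ (p - q) * ρ y - (2 * C) ^ (p - q) * ρ x := mul_sub _ _ _

theorem smul {𝕜 : Type*} [SeminormedRing 𝕜] [Module 𝕜 E] [IsBoundedSMul 𝕜 E]
    {g : ι → α → 𝕜} {w : α → ℝ} {C₁ C₂ : ℝ}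
    (hg : HasVariationBound p g w) (hf : HasVariationBound p f ρ)
    (hfC : ∀ i x, ‖f i x‖ ≤ C₁) (hgC : ∀ i x, ‖g i x‖ ≤ C₂) :
    HasVariationBound p (fun i x ↦ g i x • f i x)
      (fun x ↦ 2 ^ (p - 1) * (C₂ ^ p * ρ x + C₁ ^ p * w x)) := by
  intro i x y hxy
  have hC₁ : 0 ≤ C₁ := (norm_nonneg _).trans (hfC i x)
  have hC₂ : 0 ≤ C₂ := (norm_nonneg _).trans (hgC i y)
  calc ‖g i y • f i y - g i x • f i x‖ ^ p
      ≤ 2 ^ (p - 1) *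
          (‖g i y‖ ^ p * ‖f i y - f i x‖ ^ p + ‖f i x‖ ^ p * ‖g i y - g i x‖ ^ p) :=
        norm_smul_sub_smul_pow_le p _ _ _ _
    _ ≤ 2 ^ (p - 1) * (C₂ ^ p * (ρ y - ρ x) + C₁ ^ p * (w y - w x)) := by
        gcongr
        exacts [hgC i y, hf i hxy, hfC i x, hg i hxy]
    _ = 2 ^ (p - 1) * (C₂ ^ p * ρ y + C₁ ^ p * w y) -
          2 ^ (p - 1) * (C₂ ^ p * ρ x + C₁ ^ p * w x) := by ring

end HasVariationBound

theorem stmt9_general {ι α 𝕜 E : Type*} [Preorder α] [SeminormedRing 𝕜]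
    [SeminormedAddCommGroup E] [Module 𝕜 E] [IsBoundedSMul 𝕜 E] {p q : ℕ} (hqp : q ≤ p)
    {σ : ι → α → E} {g : ι → α → 𝕜} {C₁ C₂ : ℝ}
    (hσbd : ∀ t x, ‖σ t x‖ ≤ C₁) (hgbd : ∀ t x, ‖g t x‖ ≤ C₂) {ρ w : α → ℝ}
    (hσ : HasVariationBound p σ ρ) (hg : HasVariationBound q g w) :
    HasVariationBound p (fun t x ↦ g t x • σ t x)
      (fun x ↦ 2 ^ (p - 1) * (C₂ ^ p * ρ x + C₁ ^ p * ((2 * C₂) ^ (p - q) * w x))) :=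
  (hg.of_exponent_le hgbd hqp).smul hσ hσbd hgbd

/-- The Nakao-type condition is preserved when multiplying a coefficient `σ`
by a bounded function `g` whose spatial variation is controlled by a nondecreasing `w`. -/
theorem stmt9 (σ g : ℝ → ℝ → ℝ) (C₁ C₂ : ℝ) (hC₁ : 0 ≤ C₁) (hC₂ : 0 ≤ C₂)
    (hσbd : ∀ t x, 0 ≤ t → |σ t x| ≤ C₁)
    (hgbd : ∀ t x, 0 ≤ t → |g t x| ≤ C₂)
    (ρ w : ℝ → ℝ) (hρ : Monotone ρ) (hw : Monotone w)
    (hσ : ∀ t x y, 0 ≤ t → x ≤ y → (σ t y - σ t x) ^ 2 ≤ ρ y - ρ x)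
    (hg : ∀ t x y, 0 ≤ t → x ≤ y → |g t y - g t x| ≤ w y - w x) :
    ∃ ρt : ℝ → ℝ, Monotone ρt ∧
      ∀ t x y, 0 ≤ t → x ≤ y →
        (g t y * σ t y - g t x * σ t x) ^ 2 ≤ ρt y - ρt x := by
  have hgσ := stmt9_general (ι := Set.Ici (0 : ℝ)) (σ := fun t ↦ σ t) (g := fun t ↦ g t)
    one_le_two (fun t x ↦ hσbd t x t.2) (fun t x ↦ hgbd t x t.2)
    (fun t x y hxy ↦ (sq_abs _).trans_le (hσ t x y t.2 hxy))
    (fun t x y hxy ↦ (pow_one _).trans_le (hg t x y t.2 hxy))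
  exact ⟨_, hgσ.monotone, fun t x y ht hxy ↦ (sq_abs _).symm.trans_le (hgσ ⟨t, ht⟩ hxy)⟩
end

section
/- Let f : ℝ → ℝ be a Borel function and 0 < c ≤ C < ∞ constants with c ≤ f(x) ≤ C for all x. Define F(x) = ∫_0^x f(a) da. Then F is a strictly increasing bijection of ℝ onto ℝ satisfying c·(y−x) ≤ F(y) − F(x) ≤ C·(y−x) for x ≤ y, and its inverse G = F^{-1} satisfies G(y) = ∫_0^y (1 / f(G(a))) da for every y ∈ ℝ. -/
open MeasureTheory intervalIntegral

/-!
The lower bound `c > 0` makes all slopes of `F` at least `c`, so `F` is an increasing homeomorphism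
of `ℝ`. It pushes the measure `f(x) dx` forward to Lebesgue measure, because the two measures give
the same mass to every interval. The substitution `a = F(x)` is therefore legitimate without
differentiating anything, and turns `∫_0^y 1 / f(G(a)) da` into
`∫_0^{G(y)} (1 / f(x)) f(x) dx = G(y)`.
-/

section SlopeBoundedBelow

variable {F : ℝ → ℝ} {c : ℝ}

theorem strictMono_of_mul_sub_le (hc : 0 < c) (hF : ∀ x y, x ≤ y → c * (y - x) ≤ F y - F x) :
    StrictMono F := fun x y hxy =>
  sub_pos.1 ((mul_pos hc (sub_pos.2 hxy)).trans_le (hF x y hxy.le))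

theorem surjective_of_mul_sub_le (hc : 0 < c) (hF : ∀ x y, x ≤ y → c * (y - x) ≤ F y - F x)
    (hcont : Continuous F) : Function.Surjective F := by
  have hlinTop : Filter.Tendsto (fun x => c * x + F 0) Filter.atTop Filter.atTop :=
    Filter.tendsto_atTop_add_const_right _ _ (Filter.tendsto_id.const_mul_atTop hc)
  have hlinBot : Filter.Tendsto (fun x => c * x + F 0) Filter.atBot Filter.atBot :=
    Filter.tendsto_atBot_add_const_right _ _ (Filter.tendsto_id.const_mul_atBot hc)
  refine hcont.surjective (Filter.tendsto_atTop_mono' _ ?_ hlinTop)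
    (Filter.tendsto_atBot_mono' _ ?_ hlinBot)
  · filter_upwards [Filter.eventually_ge_atTop 0] with x hx
    linarith [hF 0 x hx]
  · filter_upwards [Filter.eventually_le_atBot 0] with x hx
    linarith [hF x 0 hx]

end SlopeBoundedBelow

section IntervalIntegral

variable {f : ℝ → ℝ} {x y : ℝ}

theorem intervalIntegrable_of_locallyIntegrable {E : Type*} [NormedAddCommGroup E] {g : ℝ → E}
    {μ : Measure ℝ} (hg : LocallyIntegrable g μ) (x y : ℝ) : IntervalIntegrable g μ x y :=
  (hg.integrableOn_isCompact isCompact_uIcc).intervalIntegrable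

theorem mul_sub_le_integral {c : ℝ} (hxy : x ≤ y) (hf : IntervalIntegrable f volume x y)
    (hcf : ∀ᵐ t, c ≤ f t) : c * (y - x) ≤ ∫ t in x..y, f t := by
  simpa only [intervalIntegral.integral_const, smul_eq_mul, mul_comm] using
    integral_mono_ae hxy _root_.intervalIntegrable_const hf hcf

theorem integral_le_mul_sub {C : ℝ} (hxy : x ≤ y) (hf : IntervalIntegrable f volume x y)
    (hfC : ∀ᵐ t, f t ≤ C) : ∫ t in x..y, f t ≤ C * (y - x) := by
  simpa only [intervalIntegral.integral_const, smul_eq_mul, mul_comm] using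
    integral_mono_ae hxy hf _root_.intervalIntegrable_const hfC

end IntervalIntegral

section ChangeOfVariables

variable {μ : Measure ℝ} {f : ℝ → ℝ} {e : ℝ ≃o ℝ}

theorem map_withDensity_ofReal_eq_volume (hf : LocallyIntegrable f μ) (hf₀ : 0 ≤ᵐ[μ] f)
    (he : ∀ x y, ∫ t in x..y, f t ∂μ = e y - e x) :
    (μ.withDensity fun t => ENNReal.ofReal (f t)).map e = volume := by
  refine (Measure.ext_of_Ioc _ _ fun a b hab => ?_).symm
  have hle : e.symm a ≤ e.symm b := e.symm.monotone hab.le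
  have hint : IntegrableOn f (Set.Ioc (e.symm a) (e.symm b)) μ :=
    (intervalIntegrable_of_locallyIntegrable hf _ _).1
  rw [Measure.map_apply e.continuous.measurable measurableSet_Ioc, e.preimage_Ioc,
    withDensity_apply _ measurableSet_Ioc,
    ← ofReal_integral_eq_lintegral_ofReal hint (ae_restrict_of_ae hf₀), ← integral_of_le hle, he,
    e.apply_symm_apply, e.apply_symm_apply, Real.volume_Ioc]

variable {E : Type*} [NormedAddCommGroup E] [NormedSpace ℝ E]

theorem setIntegral_comp_orderIso_symm (hf : LocallyIntegrable f μ) (hf₀ : 0 ≤ᵐ[μ] f)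
    (he : ∀ x y, ∫ t in x..y, f t ∂μ = e y - e x) (g : ℝ → E) {s : Set ℝ}
    (hs : MeasurableSet s) :
    ∫ a in e.symm ⁻¹' s, g (e.symm a) = ∫ t in s, f t • g t ∂μ := by
  have hemb : MeasurableEmbedding e := e.toHomeomorph.measurableEmbedding
  have hdensity : AEMeasurable (fun t => ENNReal.ofReal (f t)) (μ.restrict s) :=
    hf.aestronglyMeasurable.aemeasurable.ennreal_ofReal.restrict
  calc ∫ a in e.symm ⁻¹' s, g (e.symm a)
      = ∫ t in s, g t ∂μ.withDensity fun t => ENNReal.ofReal (f t) := by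
        rw [← map_withDensity_ofReal_eq_volume hf hf₀ he, hemb.setIntegral_map]
        simp only [Set.preimage_preimage, e.symm_apply_apply, Set.preimage_id']
    _ = ∫ t in s, (ENNReal.ofReal (f t)).toReal • g t ∂μ :=
        setIntegral_withDensity_eq_setIntegral_toReal_smul₀ hdensity
          (.of_forall fun _ => ENNReal.ofReal_lt_top) g hs
    _ = ∫ t in s, f t • g t ∂μ := by
        refine integral_congr_ae ?_
        filter_upwards [ae_restrict_of_ae hf₀] with t ht
        rw [ENNReal.toReal_ofReal ht]

theorem intervalIntegral_comp_orderIso_symm (hf : LocallyIntegrable f μ) (hf₀ : 0 ≤ᵐ[μ] f)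
    (he : ∀ x y, ∫ t in x..y, f t ∂μ = e y - e x) (g : ℝ → E) (x y : ℝ) :
    ∫ a in x..y, g (e.symm a) = ∫ t in e.symm x..e.symm y, f t • g t ∂μ := by
  have hIoc (a b : ℝ) :
      ∫ u in Set.Ioc a b, g (e.symm u) = ∫ t in Set.Ioc (e.symm a) (e.symm b), f t • g t ∂μ := by
    rw [← setIntegral_comp_orderIso_symm hf hf₀ he g measurableSet_Ioc, e.symm.preimage_Ioc,
      e.symm_symm, e.apply_symm_apply, e.apply_symm_apply]
  rw [intervalIntegral, intervalIntegral, hIoc, hIoc]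

theorem integral_one_div_comp_orderIso_symm (hf : LocallyIntegrable f) (hf₀ : ∀ᵐ t, 0 < f t)
    (he : ∀ x y, ∫ t in x..y, f t = e y - e x) (x y : ℝ) :
    ∫ a in x..y, 1 / f (e.symm a) = e.symm y - e.symm x :=
  calc ∫ a in x..y, 1 / f (e.symm a) = ∫ t in e.symm x..e.symm y, f t • (1 / f t) :=
        intervalIntegral_comp_orderIso_symm hf (hf₀.mono fun _ => le_of_lt) he (1 / f ·) x y
    _ = ∫ _ in e.symm x..e.symm y, (1 : ℝ) := by
        refine integral_congr_ae (hf₀.mono fun t ht _ => ?_)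
        exact mul_one_div_cancel ht.ne'
    _ = e.symm y - e.symm x := integral_one

end ChangeOfVariables

theorem stmt10_general {f : ℝ → ℝ} {c : ℝ} (hf : LocallyIntegrable f) (hc : 0 < c)
    (hcf : ∀ᵐ x, c ≤ f x) {F : ℝ → ℝ} (hF : ∀ x, F x = ∫ a in (0 : ℝ)..x, f a) :
    StrictMono F ∧ Function.Bijective F ∧
      (∀ x y, x ≤ y → c * (y - x) ≤ F y - F x ∧
        ∀ C, (∀ᵐ a, f a ≤ C) → F y - F x ≤ C * (y - x)) ∧
      ∃ G : ℝ → ℝ, Function.LeftInverse G F ∧ Function.RightInverse G F ∧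
        ∀ y, G y = ∫ a in (0 : ℝ)..y, 1 / f (G a) := by
  have hint := intervalIntegrable_of_locallyIntegrable hf
  have hsub (x y : ℝ) : ∫ t in x..y, f t = F y - F x := by
    rw [hF, hF, integral_interval_sub_left (hint 0 y) (hint 0 x)]
  have hlower (x y : ℝ) (hxy : x ≤ y) : c * (y - x) ≤ F y - F x :=
    hsub x y ▸ mul_sub_le_integral hxy (hint x y) hcf
  have hupper (x y : ℝ) (hxy : x ≤ y) (C : ℝ) (hfC : ∀ᵐ a, f a ≤ C) : F y - F x ≤ C * (y - x) :=
    hsub x y ▸ integral_le_mul_sub hxy (hint x y) hfC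
  have hcont : Continuous F := funext hF ▸ continuous_primitive hint 0
  have hmono : StrictMono F := strictMono_of_mul_sub_le hc hlower
  have hsurj : Function.Surjective F := surjective_of_mul_sub_le hc hlower hcont
  let e : ℝ ≃o ℝ := hmono.orderIsoOfSurjective F hsurj
  have he₀ : e.symm 0 = 0 := by
    have hF₀ : F 0 = 0 := (hF 0).trans integral_same
    exact (e.symm_apply_eq).2 hF₀.symm
  refine ⟨hmono, ⟨hmono.injective, hsurj⟩, fun x y hxy => ⟨hlower x y hxy, hupper x y hxy⟩,
    e.symm, e.symm_apply_apply, e.apply_symm_apply, fun y => ?_⟩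
  rw [integral_one_div_comp_orderIso_symm hf (hcf.mono fun _ => hc.trans_le) hsub, he₀, sub_zero]

/-- For a Borel `f` with `c ≤ f ≤ C` (`0 < c`), the function
`F(x) = ∫_0^x f(a) da` is a strictly increasing bi-Lipschitz bijection of `ℝ` onto `ℝ`,
and its inverse `G` satisfies `G(y) = ∫_0^y 1 / f(G(a)) da`. -/
theorem stmt10 (f : ℝ → ℝ) (hfmeas : Measurable f)
    (c C : ℝ) (hc : 0 < c) (hcC : c ≤ C)
    (hfc : ∀ x, c ≤ f x) (hfC : ∀ x, f x ≤ C)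
    (F : ℝ → ℝ) (hF : ∀ x, F x = ∫ a in (0:ℝ)..x, f a) :
    StrictMono F ∧ Function.Bijective F ∧
      (∀ x y, x ≤ y → c * (y - x) ≤ F y - F x ∧ F y - F x ≤ C * (y - x)) ∧
      ∃ G : ℝ → ℝ, Function.LeftInverse G F ∧ Function.RightInverse G F ∧
        ∀ y, G y = ∫ a in (0:ℝ)..y, 1 / f (G a) := by
  have hf : LocallyIntegrable f := (memLp_top_of_bound hfmeas.aestronglyMeasurable C
    (.of_forall fun x => abs_le.2 ⟨by linarith [hfc x], hfC x⟩)).locallyIntegrable le_top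
  obtain ⟨hmono, hbij, hbound, hinv⟩ := stmt10_general hf hc (.of_forall hfc) hF
  exact ⟨hmono, hbij, fun x y hxy => (hbound x y hxy).imp_right fun h => h C (.of_forall hfC), hinv⟩
end
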